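/- The broadcast regularization of mutual information I_b^{(∞)} vanishes on separable states: if ρ_{AB} = ∑_k p_k ρ^k_A ⊗ ρ^k_B, then lim_n (I_b)_n(ρ_{AB})/n = 0. -/

import Mathlib

open scoped BigOperators Kronecker ComplexOrder
open Matrix Filter Topology

noncomputable section

/-- Shannon entropy (log base 2) of a finitely supported distribution. -/
def shannon {I : Type} [Fintype I] (p : I → ℝ) : ℝ := -∑ i, p i * Real.logb 2 (p i)

/-- `p` is a probability distribution. -/
def IsProbDist {I : Type} [Fintype I] (p : I → ℝ) : Prop :=
  (∀ i, 0 ≤ p i) ∧ ∑ i, p i = 1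

/-- First marginal of a joint distribution. -/
def margA {I J : Type} [Fintype J] (p : I × J → ℝ) : I → ℝ := fun i => ∑ j, p (i, j)

/-- Second marginal of a joint distribution. -/
def margB {I J : Type} [Fintype I] (p : I × J → ℝ) : J → ℝ := fun j => ∑ i, p (i, j)

/-- Classical mutual information of a joint distribution. -/
def classMI {I J : Type} [Fintype I] [Fintype J] (p : I × J → ℝ) : ℝ :=
  shannon (margA p) + shannon (margB p) - shannon p

/-- Kullback-Leibler divergence (log base 2). -/
def klDiv {I : Type} [Fintype I] (p q : I → ℝ) : ℝ := ∑ i, p i * Real.logb 2 (p i / q i)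

/-- A density operator: positive semidefinite with unit trace. -/
def IsDensity {n : Type} [Fintype n] (ρ : Matrix n n ℂ) : Prop :=
  ρ.PosSemidef ∧ ρ.trace = 1

/-- Von Neumann entropy (log base 2) via the eigenvalues of a Hermitian matrix. -/
def vnEntropy {n : Type} [Fintype n] [DecidableEq n] (ρ : Matrix n n ℂ) : ℝ :=
  if h : ρ.IsHermitian then -∑ i, h.eigenvalues i * Real.logb 2 (h.eigenvalues i) else 0

/-- Partial trace over the second tensor factor. -/
def ptraceB {A B : Type} [Fintype B] (ρ : Matrix (A × B) (A × B) ℂ) : Matrix A A ℂ :=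
  Matrix.of fun a a' => ∑ b, ρ (a, b) (a', b)

/-- Partial trace over the first tensor factor. -/
def ptraceA {A B : Type} [Fintype A] (ρ : Matrix (A × B) (A × B) ℂ) : Matrix B B ℂ :=
  Matrix.of fun b b' => ∑ a, ρ (a, b) (a, b')

/-- Quantum mutual information I(A:B) = S(ρ_A) + S(ρ_B) - S(ρ_{AB}). -/
def mutInfo {A B : Type} [Fintype A] [Fintype B] [DecidableEq A] [DecidableEq B]
    (ρ : Matrix (A × B) (A × B) ℂ) : ℝ :=
  vnEntropy (ptraceB ρ) + vnEntropy (ptraceA ρ) - vnEntropy ρ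

/-- Tensor product of two bipartite states, with the cut (A₁A₂ : B₁B₂). -/
def tens2 {A₁ B₁ A₂ B₂ : Type}
    (ρ : Matrix (A₁ × B₁) (A₁ × B₁) ℂ) (σ : Matrix (A₂ × B₂) (A₂ × B₂) ℂ) :
    Matrix ((A₁ × A₂) × (B₁ × B₂)) ((A₁ × A₂) × (B₁ × B₂)) ℂ :=
  Matrix.of fun x y => ρ (x.1.1, x.2.1) (y.1.1, y.2.1) * σ (x.1.2, x.2.2) (y.1.2, y.2.2)

/-- n-fold tensor power of a bipartite state, with the A^n : B^n cut. -/
def tpow {A B : Type} (σ : Matrix (A × B) (A × B) ℂ) (n : ℕ) :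
    Matrix ((Fin n → A) × (Fin n → B)) ((Fin n → A) × (Fin n → B)) ℂ :=
  Matrix.of fun x y => ∏ i, σ (x.1 i, x.2 i) (y.1 i, y.2 i)

/-- Reduced state of the k-th copy (partial trace over all other copies). -/
def copyMarginal {A B : Type} [Fintype A] [Fintype B] [DecidableEq A] [DecidableEq B] {n : ℕ}
    (ρ : Matrix ((Fin n → A) × (Fin n → B)) ((Fin n → A) × (Fin n → B)) ℂ) (k : Fin n) :
    Matrix (A × B) (A × B) ℂ :=
  Matrix.of fun x y => ∑ f : Fin n → A, ∑ g : Fin n → B,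
    if f k = x.1 ∧ g k = x.2 then
      ρ (f, g) (Function.update f k y.1, Function.update g k y.2) else 0

/-- `τ` is an n-copy broadcast state of `ρ`. -/
def IsBroadcast {A B : Type} [Fintype A] [Fintype B] [DecidableEq A] [DecidableEq B] (n : ℕ)
    (τ : Matrix ((Fin n → A) × (Fin n → B)) ((Fin n → A) × (Fin n → B)) ℂ)
    (ρ : Matrix (A × B) (A × B) ℂ) : Prop :=
  IsDensity τ ∧ ∀ k : Fin n, copyMarginal τ k = ρ

/-- n-copy broadcast mutual information (I_b)_n. -/
def Ib {A B : Type} [Fintype A] [Fintype B] [DecidableEq A] [DecidableEq B] (n : ℕ)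
    (ρ : Matrix (A × B) (A × B) ℂ) : ℝ :=
  sInf {x | ∃ τ, IsBroadcast n τ ρ ∧ x = mutInfo τ}

/-- Partial trace of a state on (A A' : B B') over the primed (ancilla) systems. -/
def ptracePrime {A B A' B' : Type} [Fintype A'] [Fintype B']
    (τ : Matrix ((A × A') × (B × B')) ((A × A') × (B × B')) ℂ) :
    Matrix (A × B) (A × B) ℂ :=
  Matrix.of fun x y => ∑ a', ∑ b', τ ((x.1, a'), (x.2, b')) ((y.1, a'), (y.2, b'))

/-- Partial trace of a state on (A A' : B B') over the unprimed systems. -/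
def ptraceMain {A B A' B' : Type} [Fintype A] [Fintype B]
    (τ : Matrix ((A × A') × (B × B')) ((A × A') × (B × B')) ℂ) :
    Matrix (A' × B') (A' × B') ℂ :=
  Matrix.of fun x y => ∑ a, ∑ b, τ ((a, x.1), (b, x.2)) ((a, y.1), (b, y.2))

/-- Conditional entanglement of mutual information (CEMI). -/
def EI {A B : Type} [Fintype A] [Fintype B] [DecidableEq A] [DecidableEq B]
    (ρ : Matrix (A × B) (A × B) ℂ) : ℝ :=
  (1 / 2) * sInf {x | ∃ (dA dB : ℕ)
    (τ : Matrix ((A × Fin dA) × (B × Fin dB)) ((A × Fin dA) × (B × Fin dB)) ℂ),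
    IsDensity τ ∧ ptracePrime τ = ρ ∧ x = mutInfo τ - mutInfo (ptraceMain τ)}

/-- Classical squashed entanglement, via the ensemble formula. -/
def EsqC {A B : Type} [Fintype A] [Fintype B] [DecidableEq A] [DecidableEq B]
    (ρ : Matrix (A × B) (A × B) ℂ) : ℝ :=
  (1 / 2) * sInf {x | ∃ (m : ℕ) (p : Fin m → ℝ) (σ : Fin m → Matrix (A × B) (A × B) ℂ),
    (∀ k, 0 ≤ p k) ∧ (∑ k, p k = 1) ∧ (∀ k, IsDensity (σ k)) ∧
    (∑ k, (p k : ℂ) • σ k = ρ) ∧ x = ∑ k, p k * mutInfo (σ k)}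

/-- Separability of a bipartite state. -/
def Separable {A B : Type} [Fintype A] [Fintype B]
    (ρ : Matrix (A × B) (A × B) ℂ) : Prop :=
  ∃ (m : ℕ) (p : Fin m → ℝ) (σA : Fin m → Matrix A A ℂ) (σB : Fin m → Matrix B B ℂ),
    (∀ k, 0 ≤ p k) ∧ (∑ k, p k = 1) ∧ (∀ k, IsDensity (σA k) ∧ IsDensity (σB k)) ∧
    ρ = ∑ k, (p k : ℂ) • (σA k ⊗ₖ σB k)

/-- A finite POVM. -/
def IsPOVM {A ι : Type} [Fintype A] [Fintype ι] [DecidableEq A]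
    (M : ι → Matrix A A ℂ) : Prop :=
  (∀ i, (M i).PosSemidef) ∧ ∑ i, M i = 1

/-- Outcome distribution of a local product measurement. -/
def measProb {A B ι κ : Type} [Fintype A] [Fintype B]
    (M : ι → Matrix A A ℂ) (N : κ → Matrix B B ℂ)
    (ρ : Matrix (A × B) (A × B) ℂ) : ι × κ → ℝ :=
  fun x => (((M x.1 ⊗ₖ N x.2) * ρ).trace).re

/-- Completeness condition for a family of Kraus operators. -/
def IsKraus {A A' ι : Type} [Fintype A] [Fintype A'] [Fintype ι] [DecidableEq A]
    (K : ι → Matrix A' A ℂ) : Prop :=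
  ∑ i, (K i)ᴴ * K i = 1

/-- Action of the product channel Λ_A ⊗ Λ_B (given by Kraus operators) on a bipartite state. -/
def localApply {A B A' B' ι κ : Type} [Fintype A] [Fintype B] [Fintype ι] [Fintype κ]
    (K : ι → Matrix A' A ℂ) (L : κ → Matrix B' B ℂ)
    (ρ : Matrix (A × B) (A × B) ℂ) : Matrix (A' × B') (A' × B') ℂ :=
  ∑ i, ∑ j, (K i ⊗ₖ L j) * ρ * (K i ⊗ₖ L j)ᴴ

/-- Measured relative entropy distance to separable states (with optimization over local POVMs). -/
def measREE {A B : Type} [Fintype A] [Fintype B] [DecidableEq A] [DecidableEq B]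
    (ρ : Matrix (A × B) (A × B) ℂ) : ℝ :=
  sInf {x | ∃ σ : Matrix (A × B) (A × B) ℂ, IsDensity σ ∧ Separable σ ∧
    x = sSup {y | ∃ (m m' : ℕ) (M : Fin m → Matrix A A ℂ) (N : Fin m' → Matrix B B ℂ),
      IsPOVM M ∧ IsPOVM N ∧ y = klDiv (measProb M N ρ) (measProb M N σ)}}

/-- Entropy (natural log) via roots of the characteristic polynomial. -/
def ent {n : Type} [Fintype n] [DecidableEq n] (M : Matrix n n ℂ) : ℝ :=
  (M.charpoly.roots.map (fun z => Real.negMulLog z.re)).sum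

lemma ent_herm {n : Type} [Fintype n] [DecidableEq n] {M : Matrix n n ℂ} (h : M.IsHermitian) :
    ent M = ∑ i, Real.negMulLog (h.eigenvalues i) := by
  unfold ent
  rw [h.roots_charpoly_eq_eigenvalues]
  simp

lemma vn_eq {n : Type} [Fintype n] [DecidableEq n] {M : Matrix n n ℂ} (h : M.IsHermitian) :
    vnEntropy M = ent M / Real.log 2 := by
  rw [ent_herm h, vnEntropy, dif_pos h, Finset.sum_div, ← Finset.sum_neg_distrib]
  refine Finset.sum_congr rfl fun i _ => ?_
  simp [Real.negMulLog, Real.logb]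
  ring

lemma ent_diagonal {n : Type} [Fintype n] [DecidableEq n] (d : n → ℝ) :
    ent (Matrix.diagonal (fun i => (d i : ℂ))) = ∑ i, Real.negMulLog (d i) := by
  unfold ent
  rw [Matrix.charpoly_diagonal, Polynomial.roots_prod]
  · simp
  · simp [Finset.prod_ne_zero_iff, Polynomial.X_sub_C_ne_zero]

lemma ent_comm {m n : Type} [Fintype m] [DecidableEq m] [Fintype n] [DecidableEq n]
    (P : Matrix m n ℂ) (Q : Matrix n m ℂ) : ent (P * Q) = ent (Q * P) := by
  have h := Matrix.charpoly_mul_comm' P Q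
  have h2 := congrArg Polynomial.roots h
  rw [Polynomial.roots_mul (mul_ne_zero (pow_ne_zero _ Polynomial.X_ne_zero)
      (Matrix.charpoly_monic _).ne_zero),
    Polynomial.roots_mul (mul_ne_zero (pow_ne_zero _ Polynomial.X_ne_zero)
      (Matrix.charpoly_monic _).ne_zero), Polynomial.roots_X_pow, Polynomial.roots_X_pow] at h2
  have h3 := congrArg (fun s => (s.map (fun z : ℂ => Real.negMulLog z.re)).sum) h2
  simpa [ent, Multiset.map_nsmul, Multiset.sum_nsmul] using h3

lemma ent_conj {n : Type} [Fintype n] [DecidableEq n] (M W : Matrix n n ℂ) (h : W * Wᴴ = 1) :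
    ent (Wᴴ * M * W) = ent M := by
  rw [ent_comm, ← Matrix.mul_assoc, h, Matrix.one_mul]

lemma spec {n : Type} [Fintype n] [DecidableEq n] {M : Matrix n n ℂ} (h : M.PosSemidef) :
    ∃ (U : Matrix n n ℂ) (d : n → ℝ), (∀ i, 0 ≤ d i) ∧ Uᴴ * U = 1 ∧ U * Uᴴ = 1 ∧
      M = U * Matrix.diagonal (fun i => (d i : ℂ)) * Uᴴ ∧
      Uᴴ * M * U = Matrix.diagonal (fun i => (d i : ℂ)) ∧
      ent M = ∑ i, Real.negMulLog (d i) ∧ M.trace = ∑ i, (d i : ℂ) := by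
  have hU1 : (h.1.eigenvectorUnitary : Matrix n n ℂ)ᴴ * (h.1.eigenvectorUnitary : Matrix n n ℂ) = 1 :=
    Unitary.coe_star_mul_self _
  have hU2 : (h.1.eigenvectorUnitary : Matrix n n ℂ) * (h.1.eigenvectorUnitary : Matrix n n ℂ)ᴴ = 1 :=
    Unitary.coe_mul_star_self _
  have hs := h.1.spectral_theorem
  rw [Unitary.conjStarAlgAut_apply] at hs
  have hs' : M = (h.1.eigenvectorUnitary : Matrix n n ℂ) *
      Matrix.diagonal (fun i => (h.1.eigenvalues i : ℂ)) *
      (h.1.eigenvectorUnitary : Matrix n n ℂ)ᴴ := hs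
  refine ⟨h.1.eigenvectorUnitary, h.1.eigenvalues, h.eigenvalues_nonneg, hU1, hU2, hs', ?_,
    ent_herm h.1, h.1.trace_eq_sum_eigenvalues⟩
  generalize (h.1.eigenvectorUnitary : Matrix n n ℂ) = U at *
  generalize Matrix.diagonal (fun i => (h.1.eigenvalues i : ℂ)) = D at *
  calc Uᴴ * M * U = Uᴴ * (U * D * Uᴴ) * U := by rw [← hs']
    _ = (Uᴴ * U) * D * (Uᴴ * U) := by simp only [Matrix.mul_assoc]
    _ = D := by simp [hU1]

lemma ent_le_diag {n : Type} [Fintype n] [DecidableEq n] {M : Matrix n n ℂ} (h : M.PosSemidef) :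
    ent M ≤ ∑ i, Real.negMulLog (M i i).re := by
  obtain ⟨U, d, hd, hU1, hU2, hM, -, he, -⟩ := spec h
  have hdiag : ∀ i, (M i i).re = ∑ j, Complex.normSq (U i j) * d j := by
    intro i
    rw [hM, Matrix.mul_apply]
    simp only [Matrix.mul_diagonal, Matrix.conjTranspose_apply, Complex.re_sum]
    refine Finset.sum_congr rfl fun j _ => ?_
    simp [Complex.normSq_apply]; ring
  have hrow : ∀ i, ∑ j, Complex.normSq (U i j) = 1 := by
    intro i
    have := congrArg Complex.re (congrFun (congrFun hU2 i) i)
    simpa [Matrix.mul_apply, Complex.normSq_apply] using this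
  have hcol : ∀ j, ∑ i, Complex.normSq (U i j) = 1 := by
    intro i
    have := congrArg Complex.re (congrFun (congrFun hU1 i) i)
    simpa [Matrix.mul_apply, Complex.normSq_apply] using this
  rw [he]
  calc ∑ j, Real.negMulLog (d j)
      = ∑ j, (∑ i, Complex.normSq (U i j)) * Real.negMulLog (d j) := by simp [hcol]
    _ = ∑ i, ∑ j, Complex.normSq (U i j) * Real.negMulLog (d j) := by
        simp_rw [Finset.sum_mul]; exact Finset.sum_comm
    _ ≤ _ := by
        refine Finset.sum_le_sum fun i _ => ?_
        rw [hdiag i]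
        simpa using Real.concaveOn_negMulLog.le_map_sum (t := Finset.univ)
          (w := fun j => Complex.normSq (U i j)) (p := d) (fun j _ => Complex.normSq_nonneg _)
          (hrow i) (fun j _ => hd j)

lemma ent_le_diag_conj {n : Type} [Fintype n] [DecidableEq n] {M : Matrix n n ℂ}
    (h : M.PosSemidef) (W : Matrix n n ℂ) (hW : W * Wᴴ = 1) :
    ent M ≤ ∑ i, Real.negMulLog ((Wᴴ * M * W) i i).re := by
  rw [← ent_conj M W hW]
  exact ent_le_diag (h.conjTranspose_mul_mul_same W)

lemma psd_mix {n K : Type} [Fintype n] [Fintype K] (p : K → ℝ)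
    (hp : ∀ k, 0 ≤ p k) (σ : K → Matrix n n ℂ) (hσ : ∀ k, (σ k).PosSemidef) :
    (∑ k, (p k : ℂ) • σ k).PosSemidef :=
  Matrix.posSemidef_sum _ fun k _ => (hσ k).smul (by exact_mod_cast hp k)

lemma ent_concave {n K : Type} [Fintype n] [DecidableEq n] [Fintype K] (p : K → ℝ)
    (hp : ∀ k, 0 ≤ p k) (hp1 : ∑ k, p k = 1) (σ : K → Matrix n n ℂ)
    (hσ : ∀ k, (σ k).PosSemidef) :
    ∑ k, p k * ent (σ k) ≤ ent (∑ k, (p k : ℂ) • σ k) := by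
  obtain ⟨U, d, hd, hU1, hU2, -, hM, he, -⟩ := spec (psd_mix p hp σ hσ)
  have hdi : ∀ i, d i = ∑ k, p k * ((Uᴴ * σ k * U) i i).re := by
    intro i
    have := congrArg Complex.re (congrFun (congrFun hM i) i)
    rw [Matrix.mul_sum, Matrix.sum_mul] at this
    simpa [Matrix.sum_apply, eq_comm] using this
  rw [he]
  calc ∑ k, p k * ent (σ k)
      ≤ ∑ k, p k * ∑ i, Real.negMulLog ((Uᴴ * σ k * U) i i).re :=
        Finset.sum_le_sum fun k _ => mul_le_mul_of_nonneg_left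
          (ent_le_diag_conj (hσ k) U hU2) (hp k)
    _ = ∑ i, ∑ k, p k * Real.negMulLog ((Uᴴ * σ k * U) i i).re := by
        simp_rw [Finset.mul_sum]; exact Finset.sum_comm
    _ ≤ _ := by
        refine Finset.sum_le_sum fun i _ => ?_
        rw [hdi i]
        simpa using Real.concaveOn_negMulLog.le_map_sum (t := Finset.univ)
          (w := p) (p := fun k => ((Uᴴ * σ k * U) i i).re) (fun j _ => hp j)
          hp1 (fun k _ => by
            have := ((hσ k).conjTranspose_mul_mul_same U).diag_nonneg (i := i)
            exact (Complex.le_def.1 this).1)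

lemma ent_mix_le {n K : Type} [Fintype n] [DecidableEq n] [Fintype K] (p : K → ℝ)
    (hp : ∀ k, 0 ≤ p k) (σ : K → Matrix n n ℂ)
    (hσ : ∀ k, IsDensity (σ k)) :
    ent (∑ k, (p k : ℂ) • σ k) ≤ ∑ k, Real.negMulLog (p k) + ∑ k, p k * ent (σ k) := by
  classical
  choose U d hd hU1 hU2 hM hM' he ht using fun k => spec (hσ k).1
  have htr : ∀ k, ∑ i, d k i = 1 := by
    intro k
    have := ht k
    rw [(hσ k).2] at this
    exact_mod_cast this.symm
  let P : Matrix n (K × n) ℂ := Matrix.of fun a x => ((Real.sqrt (p x.1 * d x.1 x.2) : ℝ) : ℂ) * U x.1 a x.2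
  have hsq : ∀ k j, ((Real.sqrt (p k * d k j) : ℝ) : ℂ) * ((Real.sqrt (p k * d k j) : ℝ) : ℂ)
      = (p k : ℂ) * (d k j : ℂ) := by
    intro k j
    rw [← Complex.ofReal_mul, Real.mul_self_sqrt (mul_nonneg (hp k) (hd k j)), Complex.ofReal_mul]
  have h1 : ∑ k, (p k : ℂ) • σ k = P * Pᴴ := by
    ext a b
    rw [Matrix.mul_apply, Fintype.sum_prod_type, Matrix.sum_apply]
    refine Finset.sum_congr rfl fun k _ => ?_
    rw [hM k, Matrix.smul_apply, Matrix.mul_apply]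
    simp only [Matrix.mul_diagonal,
      Matrix.conjTranspose_apply, smul_eq_mul, Finset.mul_sum, P, Matrix.of_apply, star_mul',
      Complex.star_def, Complex.conj_ofReal]
    refine Finset.sum_congr rfl fun j _ => ?_
    linear_combination (-(U k a j * (starRingEnd ℂ) (U k b j))) * hsq k j
  have h2 : ∀ x : K × n, ((Pᴴ * P) x x).re = p x.1 * d x.1 x.2 := by
    rintro ⟨k, j⟩
    have hu := congrFun (congrFun (hU1 k) j) j
    rw [Matrix.mul_apply, Matrix.one_apply_eq] at hu
    have : (Pᴴ * P) (k, j) (k, j) = (p k : ℂ) * (d k j : ℂ) := by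
      rw [Matrix.mul_apply, ← hsq, ← mul_one (_ * _), ← hu, Finset.mul_sum]
      refine Finset.sum_congr rfl fun a _ => ?_
      simp [P]; ring
    rw [this]; simp
  rw [h1, ent_comm]
  refine (ent_le_diag (Matrix.posSemidef_conjTranspose_mul_self P)).trans (le_of_eq ?_)
  simp_rw [h2, Fintype.sum_prod_type, Real.negMulLog_mul, Finset.sum_add_distrib,
    ← Finset.mul_sum, ← Finset.sum_mul, htr, he, one_mul]

lemma ent_kron {m n : Type} [Fintype m] [DecidableEq m] [Fintype n] [DecidableEq n]
    {M : Matrix m m ℂ} {N : Matrix n n ℂ} (hM : IsDensity M) (hN : IsDensity N) :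
    ent (M ⊗ₖ N) = ent M + ent N := by
  obtain ⟨U, d, hd, hU1, hU2, hM1, hM', he, ht⟩ := spec hM.1
  obtain ⟨V, e, hd', hV1, hV2, hN1, hN', he', ht'⟩ := spec hN.1
  have h1 : ∑ i, d i = 1 := by rw [hM.2] at ht; exact_mod_cast ht.symm
  have h2 : ∑ i, e i = 1 := by rw [hN.2] at ht'; exact_mod_cast ht'.symm
  rw [← ent_conj (M ⊗ₖ N) (U ⊗ₖ V) (by
    rw [Matrix.conjTranspose_kronecker, ← Matrix.mul_kronecker_mul, hU2, hV2,
      Matrix.one_kronecker_one])]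
  rw [Matrix.conjTranspose_kronecker, ← Matrix.mul_kronecker_mul, ← Matrix.mul_kronecker_mul,
    hM', hN', Matrix.diagonal_kronecker_diagonal]
  have := ent_diagonal (fun x : m × n => d x.1 * e x.2)
  push_cast at this
  rw [this, he, he']
  simp_rw [Fintype.sum_prod_type, Real.negMulLog_mul, Finset.sum_add_distrib,
    ← Finset.mul_sum, ← Finset.sum_mul, h2, h1, one_mul]

lemma classical_sub {m n : Type} [Fintype m] [Fintype n] (q : m → n → ℝ) (a : m → ℝ) (b : n → ℝ)
    (hq : ∀ i j, 0 ≤ q i j) (ha : ∀ i, ∑ j, q i j = a i) (hb : ∀ j, ∑ i, q i j = b j)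
    (ha1 : ∑ i, a i = 1) :
    ∑ i, ∑ j, Real.negMulLog (q i j) ≤
      ∑ i, Real.negMulLog (a i) + ∑ j, Real.negMulLog (b j) := by
  have h1 : ∑ i, ∑ j, q i j = 1 := by simp_rw [ha, ha1]
  have hb1 : ∑ j, b j = 1 := by rw [← h1, Finset.sum_comm]; simp_rw [hb]
  have key : ∀ i j, Real.negMulLog (q i j) ≤
      -(q i j * Real.log (a i)) - q i j * Real.log (b j) + (a i * b j - q i j) := by
    intro i j
    have hai : q i j ≤ a i := ha i ▸ Finset.single_le_sum (fun j _ => hq i j) (Finset.mem_univ j)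
    have hbj : q i j ≤ b j := hb j ▸ Finset.single_le_sum (f := fun i => q i j) (fun i _ => hq i j) (Finset.mem_univ i)
    rcases (hq i j).eq_or_lt with h | h
    · rw [← h] at hai hbj ⊢
      simpa using mul_nonneg hai hbj
    · have hap := h.trans_le hai
      have hbp := h.trans_le hbj
      have := Real.log_le_sub_one_of_pos (show 0 < a i * b j / q i j by positivity)
      rw [Real.log_div (by positivity) h.ne', Real.log_mul hap.ne' hbp.ne'] at this
      have := mul_le_mul_of_nonneg_left this h.le
      have e : q i j * (a i * b j / q i j - 1) = a i * b j - q i j := by field_simp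
      rw [e] at this
      unfold Real.negMulLog
      linarith
  have e1 : ∑ i, ∑ j, q i j * Real.log (a i) = ∑ i, a i * Real.log (a i) := by
    simp_rw [← Finset.sum_mul, ha]
  have e2 : ∑ i, ∑ j, q i j * Real.log (b j) = ∑ j, b j * Real.log (b j) := by
    rw [Finset.sum_comm]; simp_rw [← Finset.sum_mul, hb]
  have e3 : ∑ i, ∑ j, a i * b j = 1 := by
    simp_rw [← Finset.mul_sum, hb1, mul_one, ha1]
  refine (Finset.sum_le_sum fun i _ => Finset.sum_le_sum fun j _ => key i j).trans (le_of_eq ?_)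
  simp only [Finset.sum_add_distrib, Finset.sum_sub_distrib, Finset.sum_neg_distrib, e1, e2, e3, h1,
    Real.negMulLog, neg_mul]
  ring

lemma ptraceB_conj {A B : Type} [Fintype A] [Fintype B] [DecidableEq A] [DecidableEq B]
    (ρ : Matrix (A × B) (A × B) ℂ) (U : Matrix A A ℂ) (V : Matrix B B ℂ) (hV : V * Vᴴ = 1) :
    ptraceB ((U ⊗ₖ V)ᴴ * ρ * (U ⊗ₖ V)) = Uᴴ * ptraceB ρ * U := by
  have hv : ∀ b b', ∑ j, V b' j * star (V b j) = if b' = b then 1 else 0 := by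
    intro b b'
    have := congrFun (congrFun hV b') b
    simpa [Matrix.mul_apply, Matrix.one_apply] using this
  ext i i'
  simp only [ptraceB, Matrix.of_apply, Matrix.mul_apply, Fintype.sum_prod_type,
    Matrix.conjTranspose_apply, Matrix.kroneckerMap_apply, Finset.sum_mul, Finset.mul_sum, star_mul']
  calc _ = ∑ a', ∑ b', ∑ a, ∑ b, star (U a i) * ρ (a, b) (a', b') * U a' i' *
        ∑ j, V b' j * star (V b j) := by
        rw [Finset.sum_comm]
        refine Finset.sum_congr rfl fun a' _ => ?_
        rw [Finset.sum_comm]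
        refine Finset.sum_congr rfl fun b' _ => ?_
        rw [Finset.sum_comm]
        refine Finset.sum_congr rfl fun a _ => ?_
        rw [Finset.sum_comm]
        refine Finset.sum_congr rfl fun b _ => ?_
        rw [Finset.mul_sum]
        refine Finset.sum_congr rfl fun j _ => ?_
        ring
    _ = _ := by
        simp_rw [hv]
        simp only [mul_ite, mul_one, mul_zero, Finset.sum_ite_eq, Finset.mem_univ, if_true]
        refine Finset.sum_congr rfl fun a' _ => ?_
        rw [Finset.sum_comm]

lemma ptraceA_conj {A B : Type} [Fintype A] [Fintype B] [DecidableEq A] [DecidableEq B]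
    (ρ : Matrix (A × B) (A × B) ℂ) (U : Matrix A A ℂ) (V : Matrix B B ℂ) (hU : U * Uᴴ = 1) :
    ptraceA ((U ⊗ₖ V)ᴴ * ρ * (U ⊗ₖ V)) = Vᴴ * ptraceA ρ * V := by
  have hv : ∀ b b', ∑ j, U b' j * star (U b j) = if b' = b then 1 else 0 := by
    intro b b'
    have := congrFun (congrFun hU b') b
    simpa [Matrix.mul_apply, Matrix.one_apply] using this
  ext i i'
  simp only [ptraceA, Matrix.of_apply, Matrix.mul_apply, Fintype.sum_prod_type,
    Matrix.conjTranspose_apply, Matrix.kroneckerMap_apply, Finset.sum_mul, Finset.mul_sum, star_mul']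
  calc _ = ∑ a', ∑ b', ∑ b, ∑ a, star (V b i) * ρ (a, b) (a', b') * V b' i' *
        ∑ j, U a' j * star (U a j) := by
        rw [Finset.sum_comm]
        refine Finset.sum_congr rfl fun a' _ => ?_
        rw [Finset.sum_comm]
        refine Finset.sum_congr rfl fun b' _ => ?_
        rw [Finset.sum_comm, Finset.sum_comm (s := (Finset.univ : Finset B))]
        refine Finset.sum_congr rfl fun a _ => ?_
        rw [Finset.sum_comm]
        refine Finset.sum_congr rfl fun b _ => ?_
        rw [Finset.mul_sum]
        refine Finset.sum_congr rfl fun j _ => ?_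
        ring
    _ = _ := by
        simp_rw [hv]
        simp only [mul_ite, mul_one, mul_zero, Finset.sum_ite_eq, Finset.mem_univ, if_true]
        rw [Finset.sum_comm]
        refine Finset.sum_congr rfl fun a' _ => ?_
        rw [Finset.sum_comm]

lemma ptraceB_psd {A B : Type} [Fintype A] [Fintype B]
    {ρ : Matrix (A × B) (A × B) ℂ} (h : ρ.PosSemidef) : (ptraceB ρ).PosSemidef := by
  have : ptraceB ρ = ∑ b, ρ.submatrix (fun a => (a, b)) (fun a => (a, b)) := by
    ext a a'; simp [ptraceB, Matrix.sum_apply]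
  rw [this]
  exact Matrix.posSemidef_sum _ fun b _ => h.submatrix _

lemma ptraceA_psd {A B : Type} [Fintype A] [Fintype B]
    {ρ : Matrix (A × B) (A × B) ℂ} (h : ρ.PosSemidef) : (ptraceA ρ).PosSemidef := by
  have : ptraceA ρ = ∑ a, ρ.submatrix (fun b => (a, b)) (fun b => (a, b)) := by
    ext a a'; simp [ptraceA, Matrix.sum_apply]
  rw [this]
  exact Matrix.posSemidef_sum _ fun b _ => h.submatrix _

lemma mutInfo_eq {A B : Type} [Fintype A] [Fintype B] [DecidableEq A] [DecidableEq B]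
    {ρ : Matrix (A × B) (A × B) ℂ} (h : ρ.PosSemidef) :
    mutInfo ρ = (ent (ptraceB ρ) + ent (ptraceA ρ) - ent ρ) / Real.log 2 := by
  unfold mutInfo
  rw [vn_eq h.1, vn_eq (ptraceA_psd h).1, vn_eq (ptraceB_psd h).1]
  ring

lemma mutInfo_nonneg {A B : Type} [Fintype A] [Fintype B] [DecidableEq A] [DecidableEq B]
    {ρ : Matrix (A × B) (A × B) ℂ} (h : IsDensity ρ) : 0 ≤ mutInfo ρ := by
  rw [mutInfo_eq h.1]
  refine div_nonneg ?_ (Real.log_nonneg (by norm_num))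
  obtain ⟨U, d, hd, hU1, hU2, hM1, hM', he, ht⟩ := spec (ptraceB_psd h.1)
  obtain ⟨V, e, hd', hV1, hV2, hN1, hN', he', ht'⟩ := spec (ptraceA_psd h.1)
  have hW : (U ⊗ₖ V) * (U ⊗ₖ V)ᴴ = 1 := by
    rw [Matrix.conjTranspose_kronecker, ← Matrix.mul_kronecker_mul, hU2, hV2,
      Matrix.one_kronecker_one]
  have h1 := ent_le_diag_conj h.1 (U ⊗ₖ V) hW
  rw [Fintype.sum_prod_type] at h1
  have hB := ptraceB_conj ρ U V hV2
  have hA := ptraceA_conj ρ U V hU2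
  rw [hM'] at hB
  rw [hN'] at hA
  have hps := h.1.conjTranspose_mul_mul_same (U ⊗ₖ V)
  have h2 := classical_sub (fun i j => (((U ⊗ₖ V)ᴴ * ρ * (U ⊗ₖ V)) (i, j) (i, j)).re) d e
    (fun i j => (Complex.le_def.1 (hps.diag_nonneg (i := (i, j)))).1)
    (fun i => by
      have := congrArg Complex.re (congrFun (congrFun hB i) i)
      rw [ptraceB, Matrix.of_apply, Complex.re_sum] at this
      simpa using this)
    (fun i => by
      have := congrArg Complex.re (congrFun (congrFun hA i) i)
      rw [ptraceA, Matrix.of_apply, Complex.re_sum] at this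
      simpa using this)
    (by
      have h3 : (ptraceB ρ).trace = 1 := by
        rw [← h.2]; simp [Matrix.trace, ptraceB, Fintype.sum_prod_type]
      rw [h3] at ht; exact_mod_cast ht.symm)
  rw [he, he']
  linarith

/-- Tensor power of a matrix. -/
def tp {A : Type} (n : ℕ) (σ : Matrix A A ℂ) : Matrix (Fin n → A) (Fin n → A) ℂ :=
  Matrix.of fun x y => ∏ i, σ (x i) (y i)

lemma sum_prod_pi {A : Type} [Fintype A] (n : ℕ) (g : Fin n → A → ℂ) :
    ∑ f : Fin n → A, ∏ i, g i (f i) = ∏ i, ∑ a, g i a := by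
  classical
  rw [Finset.prod_univ_sum]
  simp

lemma tp_mul {A : Type} [Fintype A] (n : ℕ) (C D : Matrix A A ℂ) :
    tp n (C * D) = tp n C * tp n D := by
  ext x y
  simp only [tp, Matrix.of_apply, Matrix.mul_apply, ← Finset.prod_mul_distrib]
  exact (sum_prod_pi n (fun i a => C (x i) a * D a (y i))).symm

lemma tp_density {A : Type} [Fintype A] (n : ℕ) {σ : Matrix A A ℂ} (h : IsDensity σ) :
    IsDensity (tp n σ) := by
  classical
  constructor
  · obtain ⟨U, d, hd, hU1, hU2, hM1, -⟩ := spec h.1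
    have h1 : tp n Uᴴ = (tp n U)ᴴ := by
      ext x y; simp [tp]
    have h2 : tp n (Matrix.diagonal (fun i => (d i : ℂ))) =
        Matrix.diagonal (fun x : Fin n → A => ((∏ i, d (x i) : ℝ) : ℂ)) := by
      ext x y
      by_cases hxy : x = y
      · subst hxy; simp [tp]
      · rw [Matrix.diagonal_apply_ne _ hxy]
        obtain ⟨i, hi⟩ := Function.ne_iff.1 hxy
        exact Finset.prod_eq_zero (Finset.mem_univ i) (Matrix.diagonal_apply_ne _ hi)
    rw [hM1, tp_mul, tp_mul, h1, h2]
    refine Matrix.PosSemidef.mul_mul_conjTranspose_same ?_ _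
    refine Matrix.PosSemidef.diagonal fun x => ?_
    have : (0 : ℝ) ≤ ∏ i, d (x i) := Finset.prod_nonneg fun i _ => hd _
    simpa using (Complex.zero_le_real.2 this)
  · have := sum_prod_pi n (fun _ a => σ a a)
    have h2 : ∑ a, σ a a = 1 := h.2
    simpa [Matrix.trace, tp, h2] using this

lemma tp_copy {A : Type} [Fintype A] [DecidableEq A] (n : ℕ) {σ : Matrix A A ℂ}
    (h : IsDensity σ) (k : Fin n) (x y : A) :
    ∑ f : Fin n → A, (if f k = x then tp n σ f (Function.update f k y) else 0) = σ x y := by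
  have h2 : ∑ a, σ a a = 1 := h.2
  have := sum_prod_pi n (fun i a => if i = k then (if a = x then σ a y else 0) else σ a a)
  calc _ = _ := ?_
    _ = _ := this
    _ = σ x y := ?_
  · refine Finset.sum_congr rfl fun f _ => ?_
    rw [← Finset.mul_prod_erase _ _ (Finset.mem_univ k), tp, Matrix.of_apply,
      ← Finset.mul_prod_erase _ _ (Finset.mem_univ k)]
    have : ∏ i ∈ Finset.univ.erase k, σ (f i) (Function.update f k y i) =
      ∏ i ∈ Finset.univ.erase k,
        (if i = k then (if f i = x then σ (f i) y else 0) else σ (f i) (f i)) := by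
      refine Finset.prod_congr rfl fun i hi => ?_
      have := (Finset.mem_erase.1 hi).1
      simp [this]
    rw [this]
    simp only [Function.update_self, if_true]
    split_ifs <;> simp
  · rw [Finset.prod_eq_single k]
    · simp
    · intro i _ hi; simp [hi, h2]
    · simp

section final
variable {A B K : Type} [Fintype A] [Fintype B] [Fintype K] [DecidableEq A] [DecidableEq B]

lemma kron_density {m n : Type} [Fintype m] [Fintype n]
    {M : Matrix m m ℂ} {N : Matrix n n ℂ} (hM : IsDensity M) (hN : IsDensity N) :
    IsDensity (M ⊗ₖ N) :=
  ⟨hM.1.kronecker hN.1, by rw [Matrix.trace_kronecker, hM.2, hN.2, one_mul]⟩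

lemma mix_broadcast (n : ℕ) (p : K → ℝ) (hp : ∀ k, 0 ≤ p k) (hp1 : ∑ k, p k = 1)
    (ρA : K → Matrix A A ℂ) (ρB : K → Matrix B B ℂ)
    (hA : ∀ k, IsDensity (ρA k)) (hB : ∀ k, IsDensity (ρB k)) :
    IsBroadcast n (∑ k, (p k : ℂ) • (tp n (ρA k) ⊗ₖ tp n (ρB k)))
      (∑ k, (p k : ℂ) • (ρA k ⊗ₖ ρB k)) := by
  have hd := fun k => kron_density (tp_density n (hA k)) (tp_density n (hB k))
  refine ⟨⟨psd_mix p hp _ fun k => (hd k).1, ?_⟩, ?_⟩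
  · rw [Matrix.trace_sum]
    simp only [Matrix.trace_smul, (hd _).2, smul_eq_mul, mul_one]
    exact_mod_cast hp1
  · intro c
    ext ⟨x1, x2⟩ ⟨y1, y2⟩
    simp only [copyMarginal, Matrix.of_apply, Matrix.sum_apply, Matrix.smul_apply,
      Matrix.kroneckerMap_apply, smul_eq_mul]
    calc _ = ∑ k, (p k : ℂ) * ((∑ f : Fin n → A, (if f c = x1 then
            tp n (ρA k) f (Function.update f c y1) else 0)) *
          (∑ g : Fin n → B, (if g c = x2 then
            tp n (ρB k) g (Function.update g c y2) else 0))) := by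
          simp_rw [Finset.sum_mul_sum, Finset.mul_sum]
          rw [Finset.sum_comm (s := (Finset.univ : Finset K))]
          refine Finset.sum_congr rfl fun f _ => ?_
          rw [Finset.sum_comm (s := (Finset.univ : Finset K))]
          refine Finset.sum_congr rfl fun g _ => ?_
          by_cases h1 : f c = x1 <;> by_cases h2 : g c = x2 <;> simp [h1, h2]
      _ = _ := by simp_rw [tp_copy n (hA _), tp_copy n (hB _)]

lemma mix_mutInfo (p : K → ℝ) (hp : ∀ k, 0 ≤ p k) (hp1 : ∑ k, p k = 1)
    (ρA : K → Matrix A A ℂ) (ρB : K → Matrix B B ℂ)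
    (hA : ∀ k, IsDensity (ρA k)) (hB : ∀ k, IsDensity (ρB k)) :
    mutInfo (∑ k, (p k : ℂ) • (ρA k ⊗ₖ ρB k)) ≤
      2 * (∑ k, Real.negMulLog (p k)) / Real.log 2 := by
  have hd := fun k => kron_density (hA k) (hB k)
  rw [mutInfo_eq (psd_mix p hp _ fun k => (hd k).1)]
  refine div_le_div_of_nonneg_right ?_ (Real.log_nonneg (by norm_num))
  have eA : ptraceB (∑ k, (p k : ℂ) • (ρA k ⊗ₖ ρB k)) = ∑ k, (p k : ℂ) • ρA k := by
    ext a a'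
    simp only [ptraceB, Matrix.of_apply, Matrix.sum_apply, Matrix.smul_apply,
      Matrix.kroneckerMap_apply, smul_eq_mul]
    rw [Finset.sum_comm]
    refine Finset.sum_congr rfl fun k _ => ?_
    have : ∑ b, ρB k b b = 1 := (hB k).2
    rw [← Finset.mul_sum, ← Finset.mul_sum, this, mul_one]
  have eB : ptraceA (∑ k, (p k : ℂ) • (ρA k ⊗ₖ ρB k)) = ∑ k, (p k : ℂ) • ρB k := by
    ext a a'
    simp only [ptraceA, Matrix.of_apply, Matrix.sum_apply, Matrix.smul_apply,
      Matrix.kroneckerMap_apply, smul_eq_mul]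
    rw [Finset.sum_comm]
    refine Finset.sum_congr rfl fun k _ => ?_
    have : ∑ b, ρA k b b = 1 := (hA k).2
    rw [← Finset.mul_sum, ← Finset.sum_mul, this, one_mul]
  rw [eA, eB]
  have h1 := ent_mix_le p hp ρA hA
  have h2 := ent_mix_le p hp ρB hB
  have h3 := ent_concave p hp hp1 (fun k => ρA k ⊗ₖ ρB k) (fun k => (hd k).1)
  simp only [ent_kron (hA _) (hB _), mul_add, Finset.sum_add_distrib] at h3
  linarith

end final

/-- the broadcast regularization of mutual information vanishes on
separable states. -/
theorem stmt_10 {A B K : Type} [Fintype A] [Fintype B] [Fintype K]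
    [DecidableEq A] [DecidableEq B]
    (p : K → ℝ) (hp : ∀ k, 0 ≤ p k) (hp1 : ∑ k, p k = 1)
    (ρA : K → Matrix A A ℂ) (ρB : K → Matrix B B ℂ)
    (hA : ∀ k, IsDensity (ρA k)) (hB : ∀ k, IsDensity (ρB k))
    (ρ : Matrix (A × B) (A × B) ℂ) (hρ : ρ = ∑ k, (p k : ℂ) • (ρA k ⊗ₖ ρB k)) :
    Tendsto (fun n : ℕ => Ib n ρ / n) atTop (nhds 0) := by
  have hb : ∀ n, 0 ≤ Ib n ρ ∧ Ib n ρ ≤ 2 * (∑ k, Real.negMulLog (p k)) / Real.log 2 := by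
    intro n
    have hbr := mix_broadcast n p hp hp1 ρA ρB hA hB
    rw [← hρ] at hbr
    have hnn : ∀ x ∈ {x | ∃ τ, IsBroadcast n τ ρ ∧ x = mutInfo τ}, (0 : ℝ) ≤ x := by
      rintro x ⟨τ, hτ, rfl⟩
      exact mutInfo_nonneg hτ.1
    refine ⟨Real.sInf_nonneg hnn, ?_⟩
    exact (csInf_le ⟨0, hnn⟩ ⟨_, hbr, rfl⟩).trans
      (mix_mutInfo p hp hp1 _ _ (fun k => tp_density n (hA k)) (fun k => tp_density n (hB k)))
  refine squeeze_zero (fun n => div_nonneg (hb n).1 n.cast_nonneg)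
    (fun n => div_le_div_of_nonneg_right (hb n).2 n.cast_nonneg) ?_
  exact tendsto_const_div_atTop_nhds_zero_nat _

end
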